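/- Let n ≥ 2 and let m ≥ 2 be even. There exists a nonzero polynomial P in (n−1)m+1 complex variables such that for every Hankel tensor H of order m and dimension n whose parameter vector h satisfies P(h) ≠ 0, one has rank(H) = rank_S(H) = brank(H) = brank_S(H) = rank_V(H) = 1 + (n−1)m/2. -/

import Mathlib

open scoped BigOperators
open MvPolynomial

noncomputable section

/-- An order-`m`, dimension-`n` complex tensor. -/
abbrev Tensor (m n : ℕ) := (Fin m → Fin n) → ℂ

/-- Tensors expressible as a sum of `r` rank-one tensors. -/
def cpSet (m n r : ℕ) : Set (Tensor m n) :=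
  {T | ∃ u : Fin r → Fin m → Fin n → ℂ, ∀ i, T i = ∑ k, ∏ j, u k j (i j)}

/-- Tensors expressible as a sum of `r` symmetric rank-one tensors. -/
def symSet (m n r : ℕ) : Set (Tensor m n) :=
  {T | ∃ v : Fin r → Fin n → ℂ, ∀ i, T i = ∑ k, ∏ j, v k (i j)}

/-- The Vandermonde vector `v(a,b) ∈ ℂ^n`, `v(a,b)_i = a^(n-1-i) * b^i`. -/
def vand (n : ℕ) (a b : ℂ) : Fin n → ℂ := fun i => a ^ (n - 1 - (i : ℕ)) * b ^ (i : ℕ)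

/-- Tensors expressible as a sum of `r` Vandermonde rank-one tensors. -/
def vandSet (m n r : ℕ) : Set (Tensor m n) :=
  {T | ∃ ab : Fin r → ℂ × ℂ, ∀ i, T i = ∑ k, ∏ j, vand n (ab k).1 (ab k).2 (i j)}

/-- The cp rank of a tensor. -/
def cpRank {m n : ℕ} (T : Tensor m n) : ℕ := sInf {r | T ∈ cpSet m n r}

/-- The symmetric rank of a tensor. -/
def symRank {m n : ℕ} (T : Tensor m n) : ℕ := sInf {r | T ∈ symSet m n r}

/-- The Vandermonde rank of a tensor. -/
def vandRank {m n : ℕ} (T : Tensor m n) : ℕ := sInf {r | T ∈ vandSet m n r}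

/-- The border rank of a tensor (closure in the product topology). -/
def brank {m n : ℕ} (T : Tensor m n) : ℕ := sInf {r | T ∈ closure (cpSet m n r)}

/-- The symmetric border rank of a tensor. -/
def bSymRank {m n : ℕ} (T : Tensor m n) : ℕ := sInf {r | T ∈ closure (symSet m n r)}

/-- The border Vandermonde rank of a tensor. -/
def bVandRank {m n : ℕ} (T : Tensor m n) : ℕ := sInf {r | T ∈ closure (vandSet m n r)}

/-- `T` is the Hankel tensor with parameter vector `h ∈ ℂ^{(n-1)m+1}`. -/
def IsHankel {m n : ℕ} (T : Tensor m n) (h : Fin ((n - 1) * m + 1) → ℂ) : Prop :=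
  ∀ i : Fin m → Fin n, T i = h ⟨∑ j, (i j : ℕ), by
    have h1 : ∑ j, (i j : ℕ) ≤ ∑ _j : Fin m, (n - 1) :=
      Finset.sum_le_sum fun j _ => Nat.le_pred_of_lt (i j).isLt
    simp only [Finset.sum_const, Finset.card_univ, Fintype.card_fin, smul_eq_mul] at h1
    exact Nat.lt_succ_of_le (h1.trans (le_of_eq (Nat.mul_comm m (n - 1))))⟩

/-- The `(d-r+1) × (r+1)` Hankel (catalecticant) matrix `C_{d-r,r}(h)` of `h ∈ ℂ^{d+1}`. -/
def hMat (d r : ℕ) (h : Fin (d + 1) → ℂ) : Matrix (Fin (d - r + 1)) (Fin (r + 1)) ℂ :=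
  Matrix.of fun i j => if hij : (i : ℕ) + (j : ℕ) < d + 1 then h ⟨(i : ℕ) + (j : ℕ), hij⟩ else 0

/-- The binary form `f(x,y) = f_0 x^r + f_1 x^(r-1) y + ⋯ + f_r y^r`. -/
def binForm (r : ℕ) (f : Fin (r + 1) → ℂ) : MvPolynomial (Fin 2) ℂ :=
  ∑ j : Fin (r + 1), C (f j) * X 0 ^ (r - (j : ℕ)) * X 1 ^ (j : ℕ)

/-- The binary form `h(x,y) = ∑_j binom(d,j) h_j x^j y^(d-j)` associated with `h ∈ ℂ^{d+1}`. -/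
def assocForm (d : ℕ) (h : Fin (d + 1) → ℂ) : MvPolynomial (Fin 2) ℂ :=
  ∑ j : Fin (d + 1), C ((d.choose (j : ℕ) : ℂ) * h j) * X 0 ^ (j : ℕ) * X 1 ^ (d - (j : ℕ))

/-- Parameter vectors of binary forms of Waring rank at most `r`. -/
def waringSet (d r : ℕ) : Set (Fin (d + 1) → ℂ) :=
  {h | ∃ ab : Fin r → ℂ × ℂ,
    assocForm d h = ∑ i, (C (ab i).1 * X 0 + C (ab i).2 * X 1) ^ d}

/-- The Waring rank of the binary form associated with `h`. -/
def waringRank (d : ℕ) (h : Fin (d + 1) → ℂ) : ℕ := sInf {r | h ∈ waringSet d r}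

/-- The border Waring rank of the binary form associated with `h`. -/
def bWaringRank (d : ℕ) (h : Fin (d + 1) → ℂ) : ℕ := sInf {r | h ∈ closure (waringSet d r)}

/-!
Let `s = (n - 1) * m / 2` and read the parameters `h_0, …, h_{2s}` as the moments
`L (X ^ j) = h_j` of a linear functional `L` on polynomials, the missing moment `h_{2s+1}` being
set to zero. If the Hankel matrix `(h_{i+j})_{i,j ≤ s}` is invertible, `L` has an orthogonal
polynomial of degree `s + 1`; if this polynomial moreover has distinct roots `x_k`, Gauss
quadrature at these nodes is exact up to degree `2s + 1`, so `h_j = ∑ c_k x_k ^ j`: a Vandermonde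
decomposition with `s + 1` terms. Both conditions together are the nonvanishing of one polynomial
in `h`. That polynomial is nonzero because it does not vanish at the moments of a set of `s + 1`
nodes symmetric about `0`, whose moment of order `2s + 1` is indeed zero. Conversely, the Hankel
matrix is a submatrix of the balanced flattening of the tensor, so its invertibility forces every
rank, and by closedness of `rank ≤ r` every border rank, to be at least `s + 1`.
-/

open scoped Polynomial Matrix

section Moments

variable {A B : Type*} [CommRing A] [CommRing B]

/-- The linear functional on polynomials with moments `h j`, i.e. `X ^ j ↦ h j`. -/
def momentFunctional (h : ℕ → A) : A[X] →ₗ[A] A :=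
  Polynomial.lsum fun j => LinearMap.mulRight A (h j)

/-- The `N × N` Hankel matrix `(h (i + j))`: the Gram matrix of the monomials of degree `< N` for
the bilinear form `(p, q) ↦ momentFunctional h (p * q)`. -/
def hankelMatrix (N : ℕ) (h : ℕ → A) : Matrix (Fin N) (Fin N) A :=
  Matrix.of fun i j => h (i + j)

/-- The orthogonal polynomial of degree `N` of `momentFunctional h`. It is scaled to have leading
coefficient `(hankelMatrix N h).det`, so that its coefficients are polynomials in the moments; the
lower ones come from Cramer's rule. -/
def orthogonalPoly (N : ℕ) (h : ℕ → A) : A[X] :=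
  Polynomial.C (hankelMatrix N h).det * Polynomial.X ^ N -
    ∑ j : Fin N, Polynomial.C ((hankelMatrix N h).cramer (fun i => h (i + N)) j) *
      Polynomial.X ^ (j : ℕ)

/-- A polynomial expression in the moments `h 0, …, h (2 * N - 1)` which, over a field, is nonzero
exactly when `hankelMatrix N h` is invertible and `orthogonalPoly N h` is separable. The formal
degrees `N` and `N - 1` of the resultant make it compatible with ring homomorphisms. -/
def hankelDiscr (N : ℕ) (h : ℕ → A) : A :=
  (hankelMatrix N h).det *
    (orthogonalPoly N h).resultant (orthogonalPoly N h).derivative N (N - 1)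

lemma momentFunctional_X_pow (h : ℕ → A) (j : ℕ) :
    momentFunctional h (Polynomial.X ^ j) = h j := by
  simp [momentFunctional, ← Polynomial.monomial_one_right_eq_X_pow]

lemma momentFunctional_C_mul (h : ℕ → A) (a : A) (p : A[X]) :
    momentFunctional h (Polynomial.C a * p) = a * momentFunctional h p := by
  rw [← Polynomial.smul_eq_C_mul, map_smul, smul_eq_mul]

lemma map_det_hankelMatrix (φ : A →+* B) (N : ℕ) (h : ℕ → A) :
    φ (hankelMatrix N h).det = (hankelMatrix N (φ ∘ h)).det := by
  rw [RingHom.map_det]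
  rfl

lemma map_orthogonalPoly (φ : A →+* B) (N : ℕ) (h : ℕ → A) :
    (orthogonalPoly N h).map φ = orthogonalPoly N (φ ∘ h) := by
  have map_cramer (j : Fin N) : φ ((hankelMatrix N h).cramer (fun i => h (i + N)) j) =
      (hankelMatrix N (φ ∘ h)).cramer (fun i => (φ ∘ h) (i + N)) j := by
    rw [Matrix.cramer_eq_adjugate_mulVec, Matrix.cramer_eq_adjugate_mulVec, RingHom.map_mulVec,
      ← RingHom.mapMatrix_apply, RingHom.map_adjugate]
    rfl
  simp only [orthogonalPoly, Polynomial.map_sub, Polynomial.map_mul, Polynomial.map_sum,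
    Polynomial.map_pow, Polynomial.map_C, Polynomial.map_X, map_det_hankelMatrix φ, map_cramer]

lemma map_hankelDiscr (φ : A →+* B) (N : ℕ) (h : ℕ → A) :
    φ (hankelDiscr N h) = hankelDiscr N (φ ∘ h) := by
  rw [hankelDiscr, hankelDiscr, map_mul, map_det_hankelMatrix, ← Polynomial.resultant_map_map,
    ← Polynomial.derivative_map, map_orthogonalPoly]

lemma natDegree_orthogonalPoly_le (N : ℕ) (h : ℕ → A) : (orthogonalPoly N h).natDegree ≤ N :=
  Polynomial.natDegree_le_of_degree_le <| (Polynomial.degree_sub_le _ _).trans <|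
    max_le (Polynomial.degree_C_mul_X_pow_le _ _) (Polynomial.degree_sum_fin_lt _).le

lemma coeff_orthogonalPoly_self (N : ℕ) (h : ℕ → A) :
    (orthogonalPoly N h).coeff N = (hankelMatrix N h).det := by
  rw [orthogonalPoly, Polynomial.coeff_sub, Polynomial.coeff_C_mul_X_pow, if_pos rfl,
    Polynomial.coeff_eq_zero_of_degree_lt (Polynomial.degree_sum_fin_lt _), sub_zero]

lemma natDegree_orthogonalPoly {N : ℕ} {h : ℕ → A} (hdet : (hankelMatrix N h).det ≠ 0) :
    (orthogonalPoly N h).natDegree = N :=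
  Polynomial.natDegree_eq_of_le_of_coeff_ne_zero (natDegree_orthogonalPoly_le N h)
    (coeff_orthogonalPoly_self N h ▸ hdet)

lemma orthogonalPoly_ne_zero {N : ℕ} {h : ℕ → A} (hdet : (hankelMatrix N h).det ≠ 0) :
    orthogonalPoly N h ≠ 0 := by
  intro h0
  exact hdet (by rw [← coeff_orthogonalPoly_self, h0, Polynomial.coeff_zero])

lemma momentFunctional_orthogonalPoly_mul_X_pow {N i : ℕ} (hi : i < N) (h : ℕ → A) :
    momentFunctional h (orthogonalPoly N h * Polynomial.X ^ i) = 0 := by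
  have hcramer := congrFun (Matrix.mulVec_cramer (hankelMatrix N h) fun i => h (i + N)) ⟨i, hi⟩
  rw [Matrix.mulVec, dotProduct, Pi.smul_apply, smul_eq_mul] at hcramer
  simp only [orthogonalPoly, sub_mul, Finset.sum_mul, mul_assoc, ← pow_add, map_sub, map_sum,
    momentFunctional_C_mul, momentFunctional_X_pow]
  rw [sub_eq_zero, add_comm N i]
  exact hcramer.symm.trans (Finset.sum_congr rfl fun j _ => by
    rw [hankelMatrix, Matrix.of_apply, mul_comm, add_comm i])

lemma momentFunctional_orthogonalPoly_mul {N : ℕ} (h : ℕ → A) {q : A[X]} (hq : q.natDegree < N) :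
    momentFunctional h (orthogonalPoly N h * q) = 0 := by
  rw [q.as_sum_range_C_mul_X_pow' hq, Finset.mul_sum, map_sum]
  refine Finset.sum_eq_zero fun i hi => ?_
  rw [mul_left_comm, momentFunctional_C_mul,
    momentFunctional_orthogonalPoly_mul_X_pow (Finset.mem_range.mp hi), mul_zero]

lemma momentFunctional_eq_sum_mul_eval {ι : Type*} [Fintype ι] {M : ℕ} {h : ℕ → A} {c x : ι → A}
    (hh : ∀ j < M, h j = ∑ k, c k * x k ^ j) {p : A[X]} (hp : p.natDegree < M) :
    momentFunctional h p = ∑ k, c k * p.eval (x k) := by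
  simp_rw [Polynomial.eval_eq_sum_range' hp, Finset.mul_sum]
  rw [Finset.sum_comm]
  conv_lhs => rw [p.as_sum_range_C_mul_X_pow' hp, map_sum]
  refine Finset.sum_congr rfl fun j hj => ?_
  rw [momentFunctional_C_mul, momentFunctional_X_pow, hh j (Finset.mem_range.mp hj),
    Finset.mul_sum]
  exact Finset.sum_congr rfl fun k _ => mul_left_comm _ _ _

lemma det_hankelMatrix_eq_prod_mul_sq {N : ℕ} {h : ℕ → A} {c x : Fin N → A}
    (hh : ∀ j < 2 * N, h j = ∑ k, c k * x k ^ j) :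
    (hankelMatrix N h).det = (∏ k, c k) * (Matrix.vandermonde x).det ^ 2 := by
  have hfactor : hankelMatrix N h =
      (Matrix.vandermonde x)ᵀ * Matrix.diagonal c * Matrix.vandermonde x := by
    ext i j
    rw [hankelMatrix, Matrix.of_apply, hh _ (by omega), Matrix.mul_apply]
    refine Finset.sum_congr rfl fun k _ => ?_
    rw [Matrix.mul_diagonal, Matrix.transpose_apply, Matrix.vandermonde_apply,
      Matrix.vandermonde_apply]
    ring
  rw [hfactor, Matrix.det_mul, Matrix.det_mul, Matrix.det_transpose, Matrix.det_diagonal]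
  ring

end Moments

section Quadrature

variable {K : Type*} [Field K]

lemma eq_C_leadingCoeff_mul_nodal {ι : Type*} [Fintype ι] {p : K[X]} {x : ι → K} (hp : p ≠ 0)
    (hdeg : p.natDegree = Fintype.card ι) (hx : Function.Injective x)
    (hroot : ∀ k, p.IsRoot (x k)) :
    p = Polynomial.C p.leadingCoeff * Lagrange.nodal Finset.univ x := by
  have hdeg' : p.degree = Fintype.card ι := by rw [Polynomial.degree_eq_natDegree hp, hdeg]
  refine Polynomial.eq_of_degree_le_of_eval_index_eq Finset.univ hx.injOn hdeg'.le ?_ ?_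
    fun k _ => ?_
  · rw [Polynomial.degree_C_mul (Polynomial.leadingCoeff_ne_zero.mpr hp), Lagrange.degree_nodal,
      hdeg', Finset.card_univ]
  · rw [Polynomial.leadingCoeff_mul, Polynomial.leadingCoeff_C, Lagrange.nodal_monic, mul_one]
  · rw [hroot k, Polynomial.eval_mul, Lagrange.eval_nodal_at_node (Finset.mem_univ k), mul_zero]

lemma orthogonalPoly_eq_C_det_mul_nodal {N : ℕ} {h : ℕ → K} {x : Fin N → K}
    (hdet : (hankelMatrix N h).det ≠ 0) (hx : Function.Injective x)
    (hroot : ∀ k, (orthogonalPoly N h).IsRoot (x k)) :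
    orthogonalPoly N h =
      Polynomial.C (hankelMatrix N h).det * Lagrange.nodal Finset.univ x := by
  have hdeg := natDegree_orthogonalPoly hdet
  rw [← coeff_orthogonalPoly_self, ← congrArg (orthogonalPoly N h).coeff hdeg]
  exact eq_C_leadingCoeff_mul_nodal (orthogonalPoly_ne_zero hdet) (by rw [hdeg, Fintype.card_fin])
    hx hroot

lemma exists_injective_isRoot_of_separable {p : K[X]} {N : ℕ} (hsep : p.Separable)
    (hsplits : p.Splits) (hdeg : p.natDegree = N) :
    ∃ x : Fin N → K, Function.Injective x ∧ ∀ k, p.IsRoot (x k) := by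
  classical
  have hcard : p.roots.toFinset.card = N := by
    rw [Multiset.toFinset_card_of_nodup (Polynomial.nodup_roots hsep),
      ← hsplits.natDegree_eq_card_roots, hdeg]
  let e := (p.roots.toFinset.equivFinOfCardEq hcard).symm
  exact ⟨fun k => e k, Subtype.val_injective.comp e.injective,
    fun k => Polynomial.isRoot_of_mem_roots (Multiset.mem_toFinset.mp (e k).2)⟩

lemma resultant_derivative_ne_zero_iff_separable {p : K[X]} (hp : p ≠ 0) :
    p.resultant p.derivative p.natDegree (p.natDegree - 1) ≠ 0 ↔ p.Separable := by
  obtain ⟨e, he⟩ := Nat.exists_eq_add_of_le p.natDegree_derivative_le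
  rw [he, Polynomial.resultant_add_right_deg _ _ _ _ e le_rfl,
    mul_ne_zero_iff_left (by simpa using pow_ne_zero e (Polynomial.leadingCoeff_ne_zero.mpr hp)),
    ne_eq, Polynomial.resultant_eq_zero_iff, Polynomial.Separable]
  simp [hp]

lemma hankelDiscr_ne_zero_iff {N : ℕ} {h : ℕ → K} :
    hankelDiscr N h ≠ 0 ↔ (hankelMatrix N h).det ≠ 0 ∧ (orthogonalPoly N h).Separable := by
  rw [hankelDiscr, mul_ne_zero_iff]
  refine and_congr_right fun hdet => ?_
  rw [← resultant_derivative_ne_zero_iff_separable (orthogonalPoly_ne_zero hdet),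
    natDegree_orthogonalPoly hdet]

theorem gauss_quadrature {ι : Type*} [Fintype ι] [DecidableEq ι] {x : ι → K}
    (hx : Function.Injective x) {L : K[X] →ₗ[K] K}
    (horth : ∀ q : K[X], q.natDegree < Fintype.card ι → L (Lagrange.nodal Finset.univ x * q) = 0)
    {p : K[X]} (hp : p.natDegree < 2 * Fintype.card ι) :
    L p = ∑ k, p.eval (x k) * L (Lagrange.basis Finset.univ x k) := by
  set w := Lagrange.nodal Finset.univ x
  have hw : w.Monic := Lagrange.nodal_monic
  have hwdeg : w.natDegree = Fintype.card ι := Lagrange.natDegree_nodal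
  have hquot : L (w * (p /ₘ w)) = 0 := by
    refine horth _ ?_
    rw [Polynomial.natDegree_divByMonic p hw, hwdeg]
    omega
  have hrem : p %ₘ w = Lagrange.interpolate Finset.univ x fun k => p.eval (x k) := by
    refine Lagrange.eq_interpolate_of_eval_eq _ hx.injOn ?_ fun k hk => ?_
    · exact (Polynomial.degree_modByMonic_lt p hw).trans_eq Lagrange.degree_nodal
    · exact Polynomial.eval₂_modByMonic_eq_self_of_root (Lagrange.eval_nodal_at_node hk)
  conv_lhs => rw [← Polynomial.modByMonic_add_div p w]
  rw [map_add, hquot, add_zero, hrem, Lagrange.interpolate_apply, map_sum]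
  exact Finset.sum_congr rfl fun k _ => by rw [← Polynomial.smul_eq_C_mul, map_smul, smul_eq_mul]

theorem exists_eq_sum_mul_pow_of_hankelDiscr_ne_zero [IsAlgClosed K] {N : ℕ} {h : ℕ → K}
    (hh : hankelDiscr N h ≠ 0) :
    ∃ c x : Fin N → K, ∀ j < 2 * N, h j = ∑ k, c k * x k ^ j := by
  obtain ⟨hdet, hsep⟩ := hankelDiscr_ne_zero_iff.mp hh
  obtain ⟨x, hx, hroot⟩ := exists_injective_isRoot_of_separable hsep (IsAlgClosed.splits _)
    (natDegree_orthogonalPoly hdet)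
  have horth (q : K[X]) (hq : q.natDegree < Fintype.card (Fin N)) :
      momentFunctional h (Lagrange.nodal Finset.univ x * q) = 0 := by
    have hzero := momentFunctional_orthogonalPoly_mul h (by simpa using hq)
    rw [orthogonalPoly_eq_C_det_mul_nodal hdet hx hroot, mul_assoc, momentFunctional_C_mul] at hzero
    exact (mul_eq_zero.mp hzero).resolve_left hdet
  refine ⟨fun k => momentFunctional h (Lagrange.basis Finset.univ x k), x, fun j hj => ?_⟩
  rw [← momentFunctional_X_pow h j, gauss_quadrature hx horth (by simpa using hj)]
  simp [mul_comm]

theorem hankelDiscr_ne_zero_of_eq_sum_mul_pow {N : ℕ} {h : ℕ → K} {c x : Fin N → K}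
    (hc : ∀ k, c k ≠ 0) (hx : Function.Injective x)
    (hh : ∀ j < 2 * N, h j = ∑ k, c k * x k ^ j) : hankelDiscr N h ≠ 0 := by
  have hdet : (hankelMatrix N h).det ≠ 0 := by
    rw [det_hankelMatrix_eq_prod_mul_sq hh]
    exact mul_ne_zero (Finset.prod_ne_zero_iff.mpr fun k _ => hc k)
      (pow_ne_zero 2 (Matrix.det_vandermonde_ne_zero_iff.mpr hx))
  -- Orthogonality to the `k`-th Lagrange basis polynomial isolates the value at `x k`.
  have hroot (k : Fin N) : (orthogonalPoly N h).IsRoot (x k) := by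
    have hbasis : (Lagrange.basis Finset.univ x k).natDegree = N - 1 := by
      rw [Lagrange.natDegree_basis hx.injOn (Finset.mem_univ k), Finset.card_fin]
    have horth := momentFunctional_orthogonalPoly_mul h
      (hbasis.trans_lt (Nat.sub_lt k.pos one_pos))
    rw [momentFunctional_eq_sum_mul_eval hh, Finset.sum_eq_single k] at horth
    · simpa [hc k, Lagrange.eval_basis_self hx.injOn (Finset.mem_univ k)] using horth
    · intro l _ hl
      simp [Lagrange.eval_basis_of_ne hl.symm (Finset.mem_univ l)]
    · simp
    · refine Polynomial.natDegree_mul_le.trans_lt ?_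
      rw [hbasis, natDegree_orthogonalPoly hdet]
      have := k.pos
      omega
  refine hankelDiscr_ne_zero_iff.mpr ⟨hdet, ?_⟩
  rw [orthogonalPoly_eq_C_det_mul_nodal hdet hx hroot]
  exact (Polynomial.separable_prod_X_sub_C_iff.mpr hx).unit_mul
    (Polynomial.isUnit_C.mpr hdet.isUnit)

end Quadrature

section Genericity

/-- The moment sequence given by a finite vector, all further moments being zero. -/
def momentSeq {A : Type*} [Zero A] {M : ℕ} (h : Fin M → A) : ℕ → A :=
  Function.extend Fin.val h 0

lemma momentSeq_val {A : Type*} [Zero A] {M : ℕ} (h : Fin M → A) (i : Fin M) :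
    momentSeq h i = h i :=
  Fin.val_injective.extend_apply h 0 i

lemma momentSeq_of_le {A : Type*} [Zero A] {M : ℕ} (h : Fin M → A) {j : ℕ} (hj : M ≤ j) :
    momentSeq h j = 0 := by
  refine Function.extend_apply' h (0 : ℕ → A) j ?_
  rintro ⟨i, rfl⟩
  exact hj.not_gt i.isLt

/-- `hankelDiscr N` as a polynomial in the first `M` moments, the others being zero. -/
def hankelDiscrPoly (R : Type*) [CommRing R] (M N : ℕ) : MvPolynomial (Fin M) R :=
  hankelDiscr N (momentSeq X)

lemma eval_hankelDiscrPoly {R : Type*} [CommRing R] {M : ℕ} (N : ℕ) (h : Fin M → R) :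
    eval h (hankelDiscrPoly R M N) = hankelDiscr N (momentSeq h) := by
  rw [hankelDiscrPoly, map_hankelDiscr]
  congr 1
  funext j
  rw [Function.comp_apply, momentSeq, Function.apply_extend (eval h)]
  congr 1
  funext i
  simp

lemma injective_sub_rev (K : Type*) [Ring K] [CharZero K] (N : ℕ) :
    Function.Injective fun k : Fin N => ((k : ℕ) : K) - (k.rev : ℕ) := by
  intro k l hkl
  have hcast : (((k + l.rev : ℕ) : ℕ) : K) = ((l + k.rev : ℕ) : ℕ) := by
    push_cast
    exact sub_eq_sub_iff_add_eq_add.mp hkl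
  have hnat : (k + l.rev : ℕ) = l + k.rev := Nat.cast_injective hcast
  simp only [Fin.val_rev] at hnat
  omega

lemma sum_sub_rev_pow_eq_zero_of_odd {K : Type*} [Field K] [CharZero K] (N : ℕ) {j : ℕ}
    (hj : Odd j) : ∑ k : Fin N, (((k : ℕ) : K) - (k.rev : ℕ)) ^ j = 0 := by
  refine self_eq_neg.mp ?_
  rw [← Finset.sum_neg_distrib]
  refine Fintype.sum_equiv Fin.revPerm _ _ fun k => ?_
  rw [Fin.revPerm_apply, Fin.rev_rev, ← hj.neg_pow, neg_sub]

lemma hankelDiscrPoly_ne_zero (K : Type*) [Field K] [CharZero K] {M N : ℕ}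
    (hM : 2 * N ≤ M + 1) : hankelDiscrPoly K M N ≠ 0 := by
  let x (k : Fin N) : K := ((k : ℕ) : K) - (k.rev : ℕ)
  let h (i : Fin M) : K := ∑ k, x k ^ (i : ℕ)
  have hmoments (j : ℕ) (hj : j < 2 * N) : momentSeq h j = ∑ k, 1 * x k ^ j := by
    simp only [one_mul]
    rcases lt_or_ge j M with hlt | hge
    · exact momentSeq_val h ⟨j, hlt⟩
    · rw [momentSeq_of_le h hge, sum_sub_rev_pow_eq_zero_of_odd N ⟨N - 1, by omega⟩]
  intro h0
  refine hankelDiscr_ne_zero_of_eq_sum_mul_pow (fun _ => one_ne_zero) (injective_sub_rev K N)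
    hmoments ?_
  rw [← eval_hankelDiscrPoly, h0, map_zero]

end Genericity

section Ranks

variable {m n k l r : ℕ}

lemma symSet_subset_cpSet : symSet m n r ⊆ cpSet m n r :=
  fun _ ⟨v, hv⟩ => ⟨fun k _ => v k, hv⟩

lemma vandSet_subset_symSet : vandSet m n r ⊆ symSet m n r :=
  fun _ ⟨ab, hab⟩ => ⟨fun k => vand n (ab k).1 (ab k).2, hab⟩

lemma prod_vand (a x : ℂ) (i : Fin m → Fin n) :
    ∏ j, vand n a (a * x) (i j) = a ^ ((n - 1) * m) * x ^ ∑ j, (i j : ℕ) := by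
  have hvand (j : Fin m) : vand n a (a * x) (i j) = a ^ (n - 1) * x ^ (i j : ℕ) := by
    rw [vand, mul_pow, ← mul_assoc, ← pow_add, Nat.sub_add_cancel (by omega)]
  simp only [hvand, Finset.prod_mul_distrib, Finset.prod_pow_eq_pow_sum, Finset.sum_const,
    Finset.card_univ, Fintype.card_fin, smul_eq_mul, mul_comm m]

lemma IsHankel.mem_vandSet {H : Tensor m n} {h : Fin ((n - 1) * m + 1) → ℂ} (hH : IsHankel H h)
    (hd : (n - 1) * m ≠ 0) {c x : Fin r → ℂ} (hcx : ∀ i, h i = ∑ k, c k * x k ^ (i : ℕ)) :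
    H ∈ vandSet m n r := by
  choose a ha using fun k => IsAlgClosed.exists_pow_nat_eq (c k) (Nat.pos_of_ne_zero hd)
  refine ⟨fun k => (a k, a k * x k), fun i => ?_⟩
  simp_rw [hH i, hcx, prod_vand, ha]

/-- The flattening of a tensor along the splitting of its modes into the first `k` and the last
`l`. -/
def flattening (T : Tensor (k + l) n) : Matrix (Fin k → Fin n) (Fin l → Fin n) ℂ :=
  Matrix.of fun a b => T (Fin.append a b)

lemma rank_flattening_le_of_mem_cpSet {T : Tensor (k + l) n} (hT : T ∈ cpSet (k + l) n r) :
    (flattening T).rank ≤ r := by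
  obtain ⟨u, hu⟩ := hT
  have hfactor : flattening T =
      Matrix.of (fun a (t : Fin r) => ∏ j, u t (Fin.castAdd l j) (a j)) *
        Matrix.of fun (t : Fin r) b => ∏ j, u t (Fin.natAdd k j) (b j) := by
    ext a b
    simp [flattening, Matrix.mul_apply, hu, Fin.prod_univ_add, -Fin.natAdd_eq_addNat]
  rw [hfactor]
  exact (Matrix.rank_mul_le_left _ _).trans
    ((Matrix.rank_le_card_width _).trans_eq (Fintype.card_fin r))

lemma isClosed_setOf_rank_le {𝕜 ι κ : Type*} [NontriviallyNormedField 𝕜] [CompleteSpace 𝕜]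
    [Finite ι] [Fintype κ] (r : ℕ) : IsClosed {M : Matrix ι κ 𝕜 | M.rank ≤ r} := by
  classical
  have := Fintype.ofFinite ι
  let toCLM : Matrix ι κ 𝕜 →ₗ[𝕜] (κ → 𝕜) →L[𝕜] (ι → 𝕜) :=
    LinearMap.toContinuousLinearMap.toLinearMap ∘ₗ Matrix.toLin'.toLinearMap
  have hcont : Continuous toCLM := toCLM.continuous_of_finiteDimensional
  convert! ((isOpen_setOfPred_nat_le_rank (r + 1)).preimage hcont).isClosed_compl using 1
  ext M
  have hrank : (toCLM M : (κ → 𝕜) →ₗ[𝕜] (ι → 𝕜)).rank = M.rank :=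
    (Module.finrank_eq_rank 𝕜 _).symm
  simp only [Set.mem_ofPred_eq, Set.mem_compl_iff, Set.mem_preimage, hrank, Nat.cast_le]
  omega

lemma rank_flattening_le_of_mem_closure_cpSet {T : Tensor (k + l) n}
    (hT : T ∈ closure (cpSet (k + l) n r)) : (flattening T).rank ≤ r := by
  have hcont : Continuous (flattening : Tensor (k + l) n → _) :=
    continuous_matrix fun _ _ => continuous_apply _
  exact closure_minimal (fun _ => rank_flattening_le_of_mem_cpSet)
    ((isClosed_setOf_rank_le r).preimage hcont) hT

lemma exists_sum_val_eq {p : ℕ} (hn : 0 < n) (hp : p ≤ (n - 1) * k) :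
    ∃ a : Fin k → Fin n, ∑ j, (a j : ℕ) = p := by
  induction k generalizing p with
  | zero => exact ⟨Fin.elim0, by simpa [eq_comm] using hp⟩
  | succ k ih =>
    rw [Nat.mul_succ] at hp
    obtain ⟨a, ha⟩ := ih (p := p - min p (n - 1)) (by omega)
    refine ⟨Fin.cons ⟨min p (n - 1), by omega⟩ a, ?_⟩
    simp only [Fin.sum_univ_succ, Fin.cons_zero, Fin.cons_succ, ha]
    omega

lemma IsHankel.exists_submatrix_flattening_eq {H : Tensor (k + k) n}
    {h : Fin ((n - 1) * (k + k) + 1) → ℂ} (hH : IsHankel H h) (hn : 0 < n) :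
    ∃ α : Fin ((n - 1) * k + 1) → Fin k → Fin n,
      (flattening H).submatrix α α = hankelMatrix ((n - 1) * k + 1) (momentSeq h) := by
  choose α hα using fun p : Fin ((n - 1) * k + 1) =>
    exists_sum_val_eq hn (Nat.lt_succ_iff.mp p.isLt)
  refine ⟨α, Matrix.ext fun p q => ?_⟩
  rw [Matrix.submatrix_apply, flattening, Matrix.of_apply, hH, ← momentSeq_val h,
    hankelMatrix, Matrix.of_apply]
  simp [Fin.sum_univ_add, hα, -Fin.natAdd_eq_addNat]

lemma IsHankel.le_of_mem_closure_cpSet {H : Tensor (k + k) n}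
    {h : Fin ((n - 1) * (k + k) + 1) → ℂ} (hH : IsHankel H h) (hn : 0 < n)
    (hdet : (hankelMatrix ((n - 1) * k + 1) (momentSeq h)).det ≠ 0)
    (hr : H ∈ closure (cpSet (k + k) n r)) : (n - 1) * k + 1 ≤ r := by
  obtain ⟨α, hα⟩ := hH.exists_submatrix_flattening_eq hn
  calc (n - 1) * k + 1 = (hankelMatrix ((n - 1) * k + 1) (momentSeq h)).rank := by
        rw [Matrix.rank_of_isUnit _ ((Matrix.isUnit_iff_isUnit_det _).mpr hdet.isUnit),
          Fintype.card_fin]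
    _ ≤ (flattening H).rank := hα ▸ Matrix.rank_submatrix_le _ α α
    _ ≤ r := rank_flattening_le_of_mem_closure_cpSet hr

end Ranks

/-- For a generic Hankel tensor of even order, all ranks equal
`1 + (n-1)m/2`. -/
theorem stmt_10 (n m : ℕ) (hn : 2 ≤ n) (hm : 2 ≤ m) (hme : Even m) :
    ∃ P : MvPolynomial (Fin ((n - 1) * m + 1)) ℂ, P ≠ 0 ∧
      ∀ (H : Tensor m n) (h : Fin ((n - 1) * m + 1) → ℂ), IsHankel H h →
        MvPolynomial.eval h P ≠ 0 →
        cpRank H = 1 + (n - 1) * m / 2 ∧ symRank H = 1 + (n - 1) * m / 2 ∧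
        brank H = 1 + (n - 1) * m / 2 ∧ bSymRank H = 1 + (n - 1) * m / 2 ∧
        vandRank H = 1 + (n - 1) * m / 2 := by
  obtain ⟨k, rfl⟩ := hme
  set N := (n - 1) * k + 1
  have hd : (n - 1) * (k + k) = 2 * ((n - 1) * k) := by ring
  have hpos : 0 < (n - 1) * k := Nat.mul_pos (by omega) (by omega)
  refine ⟨hankelDiscrPoly ℂ _ N, hankelDiscrPoly_ne_zero ℂ (by omega), fun H h hH hP => ?_⟩
  rw [eval_hankelDiscrPoly] at hP
  obtain ⟨c, x, hcx⟩ := exists_eq_sum_mul_pow_of_hankelDiscr_ne_zero hP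
  have hvand : H ∈ vandSet (k + k) n N :=
    hH.mem_vandSet (by omega) fun i => momentSeq_val h i ▸ hcx i (by omega)
  have rank_eq {S : ℕ → Set (Tensor (k + k) n)} (hlower : vandSet (k + k) n N ⊆ S N)
      (hupper : ∀ r, S r ⊆ closure (cpSet (k + k) n r)) : sInf {r | H ∈ S r} = N :=
    IsLeast.csInf_eq ⟨hlower hvand, fun r hr =>
      hH.le_of_mem_closure_cpSet (by omega) (left_ne_zero_of_mul hP) (hupper r hr)⟩
  have hsym := vandSet_subset_symSet.trans (symSet_subset_cpSet (m := k + k) (n := n) (r := N))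
  rw [show 1 + (n - 1) * (k + k) / 2 = N by omega]
  exact ⟨rank_eq hsym fun _ => subset_closure,
    rank_eq vandSet_subset_symSet fun _ => symSet_subset_cpSet.trans subset_closure,
    rank_eq (hsym.trans subset_closure) fun _ => subset_rfl,
    rank_eq (vandSet_subset_symSet.trans subset_closure) fun _ => closure_mono symSet_subset_cpSet,
    rank_eq subset_rfl fun _ =>
      (vandSet_subset_symSet.trans symSet_subset_cpSet).trans subset_closure⟩
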